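/- arXiv:1607.02409 — 3 statements merged into one kernel-verified Lean document; each statement's English description precedes it below -/
import Mathlib

section
/- Let J(x) = x·tanh x and Ω(ξ,η,ζ) = J(ξ)² + J(η)² + J(ζ)² − 2J(ξ)J(η) − 2J(η)J(ζ) − 2J(ζ)J(ξ). Then for all real ξ, η, ζ with ξ + η + ζ = 0, one has Ω(ξ,η,ζ) = 0 if and only if ξ·η·ζ = 0; in particular Ω is strictly negative on the plane {ξ + η + ζ = 0} away from the three lines ξ = 0, η = 0, ζ = 0. -/
noncomputable def J (x : ℝ) : ℝ := x * Real.tanh x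

noncomputable def Ω (ξ η ζ : ℝ) : ℝ :=
  J ξ ^ 2 + J η ^ 2 + J ζ ^ 2 - 2 * J ξ * J η - 2 * J η * J ζ - 2 * J ζ * J ξ

/-! Writing `J = f ^ 2` with `f = √J`, Heron's factorization turns `-Ω ξ η ζ` into the product of
`f ξ + f η + f ζ` and the three differences `f ξ + f η - f ζ`, ..., so `Ω < 0` as soon as `f ξ`,
`f η`, `f ζ` satisfy the strict triangle inequalities. Since `f` is even, on the resonant plane
these say that `f (x + y) < f x + f y`. As `f` increases with `|x|`, it suffices to treat
`x, y > 0`, where the inequality holds because the phase speed `f x / x = √(tanh x / x)` is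
strictly decreasing. -/

open Set

theorem map_abs_of_even {G β : Type*} [AddGroup G] [LinearOrder G] {f : G → β}
    (hf : f.Even) (x : G) : f |x| = f x := by
  rcases abs_choice x with h | h <;> rw [h]
  exact hf x

section Subadditivity

variable {K : Type*} [Field K] [LinearOrder K] [IsStrictOrderedRing K] {f : K → K} {x y : K}

theorem map_add_lt_add_of_strictAntiOn_div (hf : StrictAntiOn (fun t ↦ f t / t) (Ioi 0))
    (hx : 0 < x) (hy : 0 < y) : f (x + y) < f x + f y := by
  have hxy : 0 < x + y := add_pos hx hy
  have hfx : f (x + y) / (x + y) < f x / x := hf hx hxy (lt_add_of_pos_right x hy)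
  have hfy : f (x + y) / (x + y) < f y / y := hf hy hxy (lt_add_of_pos_left y hx)
  calc f (x + y) = x * (f (x + y) / (x + y)) + y * (f (x + y) / (x + y)) := by field_simp
    _ < x * (f x / x) + y * (f y / y) := by gcongr
    _ = f x + f y := by field_simp

theorem map_add_lt_add_of_even (hf : f.Even) (hmono : MonotoneOn f (Ici 0))
    (hanti : StrictAntiOn (fun t ↦ f t / t) (Ioi 0)) (hx : x ≠ 0) (hy : y ≠ 0) :
    f (x + y) < f x + f y :=
  calc f (x + y) = f |x + y| := (map_abs_of_even hf _).symm
    _ ≤ f (|x| + |y|) := hmono (abs_nonneg _) (add_nonneg (abs_nonneg x) (abs_nonneg y))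
        (abs_add_le x y)
    _ < f |x| + f |y| :=
        map_add_lt_add_of_strictAntiOn_div hanti (abs_pos.2 hx) (abs_pos.2 hy)
    _ = f x + f y := by rw [map_abs_of_even hf, map_abs_of_even hf]

end Subadditivity

theorem hasDerivAt_tanh (x : ℝ) : HasDerivAt Real.tanh (1 / Real.cosh x ^ 2) x := by
  have hquot := (Real.hasDerivAt_sinh x).div (Real.hasDerivAt_cosh x) (Real.cosh_pos x).ne'
  have hnum : Real.cosh x * Real.cosh x - Real.sinh x * Real.sinh x = 1 := by
    rw [← sq, ← sq, Real.cosh_sq_sub_sinh_sq]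
  rw [hnum] at hquot
  exact hquot.congr_of_eventuallyEq (.of_forall Real.tanh_eq_sinh_div_cosh)

theorem strictMono_tanh : StrictMono Real.tanh :=
  strictMono_of_hasDerivAt_pos hasDerivAt_tanh fun x ↦ by
    have := Real.cosh_pos x
    positivity

theorem tanh_nonneg {x : ℝ} (hx : 0 ≤ x) : 0 ≤ Real.tanh x :=
  Real.tanh_zero.symm.trans_le (strictMono_tanh.monotone hx)

theorem self_lt_sinh_mul_cosh {x : ℝ} (hx : 0 < x) : x < Real.sinh x * Real.cosh x := by
  have h : 2 * x < Real.sinh (2 * x) := Real.self_lt_sinh_iff.2 (by positivity)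
  rw [Real.sinh_two_mul] at h
  linarith

theorem strictAntiOn_tanh_div : StrictAntiOn (fun x ↦ Real.tanh x / x) (Ioi 0) := by
  have hderiv (x : ℝ) (hx : 0 < x) :
      HasDerivAt (fun x ↦ Real.tanh x / x)
        ((1 / Real.cosh x ^ 2 * x - Real.tanh x * 1) / x ^ 2) x :=
    (hasDerivAt_tanh x).div (hasDerivAt_id x) hx.ne'
  refine strictAntiOn_of_deriv_neg (convex_Ioi 0)
    (fun x hx ↦ (hderiv x hx).continuousAt.continuousWithinAt) fun x hx ↦ ?_
  rw [interior_Ioi] at hx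
  have hcosh : 0 < Real.cosh x := Real.cosh_pos x
  have hnum : 1 / Real.cosh x ^ 2 * x - Real.tanh x * 1
      = (x - Real.sinh x * Real.cosh x) / Real.cosh x ^ 2 := by
    rw [Real.tanh_eq_sinh_div_cosh]
    field_simp
  rw [(hderiv x hx).deriv, hnum]
  exact div_neg_of_neg_of_pos
    (div_neg_of_neg_of_pos (sub_neg.2 (self_lt_sinh_mul_cosh hx)) (pow_pos hcosh 2))
    (pow_pos hx 2)

theorem J_zero : J 0 = 0 := zero_mul _

theorem even_J : J.Even := fun x ↦ by rw [J, J, Real.tanh_neg, neg_mul_neg]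

theorem monotoneOn_J : MonotoneOn J (Ici 0) :=
  monotoneOn_id.mul (strictMono_tanh.monotone.monotoneOn _) (fun _ hx ↦ hx)
    fun _ hx ↦ tanh_nonneg hx

theorem J_nonneg (x : ℝ) : 0 ≤ J x := by
  rw [← map_abs_of_even even_J]
  exact mul_nonneg (abs_nonneg x) (tanh_nonneg (abs_nonneg x))

/-- The absolute value `|ω x|` of the water-wave dispersion relation
`ω x = -sgn x * √(x * tanh x)`; dropping the sign makes it even and subadditive. -/
noncomputable def absFreq (x : ℝ) : ℝ := √(J x)

theorem sq_absFreq (x : ℝ) : absFreq x ^ 2 = J x := Real.sq_sqrt (J_nonneg x)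

theorem even_absFreq : absFreq.Even := even_J.left_comp Real.sqrt

theorem monotoneOn_absFreq : MonotoneOn absFreq (Ici 0) :=
  fun _ hx _ hy hxy ↦ Real.sqrt_le_sqrt (monotoneOn_J hx hy hxy)

theorem absFreq_div_self {x : ℝ} (hx : 0 < x) : absFreq x / x = √(Real.tanh x / x) :=
  calc absFreq x / x = √(J x) / √(x ^ 2) := by rw [absFreq, Real.sqrt_sq hx.le]
    _ = √(J x / x ^ 2) := (Real.sqrt_div (J_nonneg x) _).symm
    _ = √(Real.tanh x / x) := by rw [J, sq, mul_div_mul_left _ _ hx.ne']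

theorem strictAntiOn_absFreq_div : StrictAntiOn (fun x ↦ absFreq x / x) (Ioi 0) := by
  intro x hx y hy hxy
  simp only [absFreq_div_self hx, absFreq_div_self hy]
  exact Real.sqrt_lt_sqrt (div_nonneg (tanh_nonneg (le_of_lt hy)) (le_of_lt hy))
    (strictAntiOn_tanh_div hx hy hxy)

theorem absFreq_lt_add {x y z : ℝ} (hx : x ≠ 0) (hy : y ≠ 0) (h : x + y + z = 0) :
    absFreq z < absFreq x + absFreq y := by
  rw [← even_absFreq z, neg_eq_of_add_eq_zero_left h]
  exact map_add_lt_add_of_even even_absFreq monotoneOn_absFreq strictAntiOn_absFreq_div hx hy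

theorem Ω_eq_neg_heron (ξ η ζ : ℝ) :
    Ω ξ η ζ = -((absFreq ξ + absFreq η + absFreq ζ) * (absFreq ξ + absFreq η - absFreq ζ) *
      (absFreq η + absFreq ζ - absFreq ξ) * (absFreq ζ + absFreq ξ - absFreq η)) := by
  simp only [Ω, ← sq_absFreq]
  ring

theorem Ω_rotate (ξ η ζ : ℝ) : Ω η ζ ξ = Ω ξ η ζ := by
  unfold Ω
  ring

theorem Ω_zero_left {η ζ : ℝ} (h : η + ζ = 0) : Ω 0 η ζ = 0 := by
  have hJ : J η = J ζ := by rw [eq_neg_of_add_eq_zero_left h, even_J]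
  rw [Ω, J_zero, hJ]
  ring

theorem Ω_eq_zero {ξ η ζ : ℝ} (h : ξ + η + ζ = 0) (h0 : ξ * η * ζ = 0) : Ω ξ η ζ = 0 := by
  obtain (rfl | rfl) | rfl : (ξ = 0 ∨ η = 0) ∨ ζ = 0 := by simpa only [mul_eq_zero] using h0
  · exact Ω_zero_left (by linarith)
  · rw [← Ω_rotate]
    exact Ω_zero_left (by linarith)
  · rw [← Ω_rotate, ← Ω_rotate]
    exact Ω_zero_left (by linarith)

theorem Ω_lt_zero {ξ η ζ : ℝ} (h : ξ + η + ζ = 0) (h0 : ξ * η * ζ ≠ 0) : Ω ξ η ζ < 0 := by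
  obtain ⟨⟨hξ, hη⟩, hζ⟩ : (ξ ≠ 0 ∧ η ≠ 0) ∧ ζ ≠ 0 := by simpa only [mul_ne_zero_iff] using h0
  have hζ_lt : absFreq ζ < absFreq ξ + absFreq η := absFreq_lt_add hξ hη h
  have hξ_lt : absFreq ξ < absFreq η + absFreq ζ := absFreq_lt_add hη hζ (by linarith)
  have hη_lt : absFreq η < absFreq ζ + absFreq ξ := absFreq_lt_add hζ hξ (by linarith)
  have hsum : 0 < absFreq ξ + absFreq η + absFreq ζ := by linarith
  rw [Ω_eq_neg_heron, neg_lt_zero]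
  exact mul_pos (mul_pos (mul_pos hsum (sub_pos.2 hζ_lt)) (sub_pos.2 hξ_lt)) (sub_pos.2 hη_lt)

/-- On the resonant plane, the symmetrized resonance function vanishes exactly
on the three lines `ξ = 0`, `η = 0`, `ζ = 0`, and is strictly negative away
from them. -/
theorem resonance_zero_iff (ξ η ζ : ℝ) (h : ξ + η + ζ = 0) :
    (Ω ξ η ζ = 0 ↔ ξ * η * ζ = 0) ∧ (ξ * η * ζ ≠ 0 → Ω ξ η ζ < 0) :=
  ⟨⟨fun hΩ ↦ by_contra fun h0 ↦ (Ω_lt_zero h h0).ne hΩ, Ω_eq_zero h⟩, Ω_lt_zero h⟩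
end

section
/- Define m : ℝ → ℝ by m(ξ) = 2ξ/sinh(2ξ) for ξ ≠ 0 and m(0) = 1. Then m is integrable on ℝ, and for every real α one has (1/(2π))·∫_ℝ m(ξ)·cos(αξ) dξ = (π/8)·sech²(πα/4). -/
open MeasureTheory

noncomputable def m (ξ : ℝ) : ℝ := if ξ = 0 then 1 else 2 * ξ / Real.sinh (2 * ξ)

/-!
The substitution `u = (1 + e⁻ˣ)⁻¹` turns the beta integral `Β(1 + z, 1 - z)` into the two-sided
Laplace transform `∫ eᶻˣ / (4 cosh² (x / 2)) dx` of the logistic density, while Euler's reflection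
formula evaluates it as `πz / sin (πz)`. On the imaginary axis this says that the Fourier transform
of the logistic density is a rescaling of `m`, and Fourier inversion recovers the `sech²` kernel
from `m`.
-/

section SigmoidSubstitution

open Set Real

theorem integral_Ioo_zero_one_eq_integral_sigmoid {E : Type*} [NormedAddCommGroup E]
    [NormedSpace ℝ E] (g : ℝ → E) :
    ∫ u in Ioo 0 1, g u = ∫ x, (sigmoid x * sigmoid (-x)) • g (sigmoid x) := by
  have h := integral_image_eq_integral_abs_deriv_smul MeasurableSet.univ
    (fun x _ ↦ (hasDerivAt_sigmoid x).hasDerivWithinAt) sigmoid_injective.injOn g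
  simpa only [image_univ, range_sigmoid, setIntegral_univ, ← sigmoid_neg, abs_mul,
    abs_of_pos (sigmoid_pos _)] using h

theorem betaIntegral_eq_integral_sigmoid (a b : ℂ) :
    Complex.betaIntegral a b = ∫ x : ℝ, (sigmoid x : ℂ) ^ a * (sigmoid (-x) : ℂ) ^ b := by
  rw [Complex.betaIntegral, intervalIntegral.integral_of_le zero_le_one,
    integral_Ioc_eq_integral_Ioo, integral_Ioo_zero_one_eq_integral_sigmoid]
  refine integral_congr_ae (.of_forall fun x ↦ ?_)
  have hpos : (sigmoid x : ℂ) ≠ 0 := mod_cast (sigmoid_pos x).ne'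
  have hneg : (sigmoid (-x) : ℂ) ≠ 0 := mod_cast (sigmoid_pos (-x)).ne'
  have hsub : 1 - (sigmoid x : ℂ) = sigmoid (-x) := by rw [sigmoid_neg]; push_cast; rfl
  simp only [hsub, Complex.real_smul, Complex.cpow_sub _ _ hpos, Complex.cpow_sub _ _ hneg,
    Complex.cpow_one]
  push_cast
  field_simp

end SigmoidSubstitution

/-- The density of the standard logistic distribution, i.e. the derivative of the sigmoid; a
rescaling of it is the convolution kernel of `m`. The factor `1 - sigmoid x` is
written as `sigmoid (-x)`. -/
noncomputable def logisticDensity (x : ℝ) : ℝ := Real.sigmoid x * Real.sigmoid (-x)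

section LogisticDensity

open Real Set
open scoped FourierTransform

theorem logisticDensity_eq_inv_cosh_sq (x : ℝ) :
    logisticDensity x = (4 * cosh (x / 2) ^ 2)⁻¹ := by
  have hexp : exp x = exp (x / 2) ^ 2 := by rw [← exp_nat_mul]; congr 1; push_cast; ring
  rw [logisticDensity, sigmoid_def, sigmoid_def, neg_neg, cosh_eq, exp_neg x, exp_neg (x / 2), hexp]
  field_simp
  ring

@[fun_prop]
theorem continuous_logisticDensity : Continuous logisticDensity := by
  unfold logisticDensity
  fun_prop

theorem integrable_logisticDensity : Integrable logisticDensity := by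
  have h := integrableOn_image_iff_integrableOn_abs_deriv_smul MeasurableSet.univ
    (fun x _ ↦ (hasDerivAt_sigmoid x).hasDerivWithinAt) sigmoid_injective.injOn fun _ ↦ (1 : ℝ)
  simp only [image_univ, range_sigmoid, integrableOn_univ, ← sigmoid_neg, abs_mul,
    abs_of_pos (sigmoid_pos _), smul_eq_mul, mul_one] at h
  exact h.1 (integrableOn_const (by simp))

theorem integral_exp_mul_logisticDensity (z : ℂ) :
    ∫ x : ℝ, Complex.exp (z * x) * logisticDensity x = Complex.betaIntegral (1 + z) (1 - z) := by
  rw [betaIntegral_eq_integral_sigmoid]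
  refine integral_congr_ae (.of_forall fun x ↦ ?_)
  have hpos : (sigmoid x : ℂ) ≠ 0 := mod_cast (sigmoid_pos x).ne'
  have hneg : (sigmoid (-x) : ℂ) ≠ 0 := mod_cast (sigmoid_pos (-x)).ne'
  have hlog : log (sigmoid x) - log (sigmoid (-x)) = x := by
    rw [← sigmoid_mul_rexp_neg, log_mul (sigmoid_pos x).ne' (exp_ne_zero _), log_exp]
    ring
  have hexp : Complex.exp (z * x) = (sigmoid x : ℂ) ^ z / (sigmoid (-x) : ℂ) ^ z := by
    rw [Complex.cpow_def_of_ne_zero hpos, Complex.cpow_def_of_ne_zero hneg, ← Complex.exp_sub,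
      ← Complex.ofReal_log (sigmoid_nonneg _), ← Complex.ofReal_log (sigmoid_nonneg _),
      ← sub_mul, ← Complex.ofReal_sub, hlog, mul_comm]
  simp only [logisticDensity, hexp, Complex.cpow_add _ _ hpos, Complex.cpow_sub _ _ hneg,
    Complex.cpow_one]
  push_cast
  ring

theorem betaIntegral_one_add_one_sub {z : ℂ} (hz : z ≠ 0) (hre : |z.re| < 1) :
    Complex.betaIntegral (1 + z) (1 - z) = π * z / Complex.sin (π * z) := by
  obtain ⟨hlower, hupper⟩ := abs_lt.1 hre
  have h := Complex.Gamma_mul_Gamma_eq_betaIntegral (s := 1 + z) (t := 1 - z)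
    (by simp only [Complex.add_re, Complex.one_re]; linarith)
    (by simp only [Complex.sub_re, Complex.one_re]; linarith)
  calc Complex.betaIntegral (1 + z) (1 - z)
      = Complex.Gamma (1 + z) * Complex.Gamma (1 - z) := by
        rw [h, show 1 + z + (1 - z) = 1 + 1 by ring, Complex.Gamma_add_one 1 one_ne_zero,
          Complex.Gamma_one, one_mul, one_mul]
    _ = z * (Complex.Gamma z * Complex.Gamma (1 - z)) := by
        rw [add_comm 1 z, Complex.Gamma_add_one z hz, mul_assoc]
    _ = π * z / Complex.sin (π * z) := by
        rw [Complex.Gamma_mul_Gamma_one_sub, mul_div_left_comm, mul_div_assoc]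

theorem betaIntegral_one_add_one_sub_mul_I (t : ℝ) :
    Complex.betaIntegral (1 + t * Complex.I) (1 - t * Complex.I) = m (π * t / 2) := by
  rcases eq_or_ne t 0 with rfl | ht
  · simp [m, Complex.betaIntegral_eval_one_right]
  · rw [betaIntegral_one_add_one_sub (by simpa using ht) (by simp), ← mul_assoc,
      Complex.sin_mul_I, m, if_neg (by positivity), mul_div_cancel₀ _ two_ne_zero]
    push_cast
    exact mul_div_mul_right _ _ Complex.I_ne_zero

theorem fourier_logisticDensity (w : ℝ) :
    𝓕 (fun x : ℝ ↦ (logisticDensity x : ℂ)) w = m (π ^ 2 * w) := by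
  have hbeta := betaIntegral_one_add_one_sub_mul_I (-2 * π * w)
  have heven : m (-(π ^ 2 * w)) = m (π ^ 2 * w) := by simp [m]
  rw [Real.fourier_real_eq_integral_exp_smul, ← heven,
    show -(π ^ 2 * w) = π * (-2 * π * w) / 2 by ring, ← hbeta,
    ← integral_exp_mul_logisticDensity]
  refine integral_congr_ae (.of_forall fun x ↦ ?_)
  simp only [smul_eq_mul]
  push_cast
  ring_nf

end LogisticDensity

section Multiplier

open Real
open scoped FourierTransform

theorem abs_le_abs_sinh (x : ℝ) : |x| ≤ |sinh x| := by
  rw [abs_sinh]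
  exact self_le_sinh_iff.2 (abs_nonneg x)

theorem one_add_sq_div_two_le_cosh (x : ℝ) : 1 + x ^ 2 / 2 ≤ cosh x := by
  have hsinh : (x / 2) ^ 2 ≤ sinh (x / 2) ^ 2 := sq_le_sq.2 (abs_le_abs_sinh _)
  have hcosh : cosh x = 1 + 2 * sinh (x / 2) ^ 2 := by
    rw [← mul_div_cancel₀ x (two_ne_zero (α := ℝ)), mul_div_assoc, cosh_two_mul, cosh_sq]
    ring_nf
  linarith

theorem integrable_inv_cosh : Integrable fun x : ℝ ↦ (cosh x)⁻¹ := by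
  refine (integrable_inv_one_add_sq.const_mul 2).mono'
    (continuous_cosh.measurable.inv.aestronglyMeasurable) (.of_forall fun x ↦ ?_)
  rw [norm_of_nonneg (by positivity), ← inv_inv (2 : ℝ), ← mul_inv]
  gcongr
  linarith [one_add_sq_div_two_le_cosh x, sq_nonneg x]

theorem abs_m_le_inv_cosh (ξ : ℝ) : |m ξ| ≤ (cosh ξ)⁻¹ := by
  rcases eq_or_ne ξ 0 with rfl | hξ
  · simp [m]
  · calc |m ξ| = |ξ| / |sinh ξ| * (cosh ξ)⁻¹ := by
          rw [m, if_neg hξ, sinh_two_mul, mul_assoc, mul_div_mul_left _ _ two_ne_zero, abs_div,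
            abs_mul, abs_of_pos (cosh_pos ξ), div_mul_eq_div_div, div_eq_mul_inv _ (cosh ξ)]
      _ ≤ (cosh ξ)⁻¹ :=
          mul_le_of_le_one_left (by positivity)
            (div_le_one_of_le₀ (abs_le_abs_sinh ξ) (abs_nonneg _))

theorem measurable_m : Measurable m :=
  Measurable.ite (measurableSet_singleton 0) measurable_const (by fun_prop)

theorem integrable_m : Integrable m :=
  integrable_inv_cosh.mono' measurable_m.aestronglyMeasurable (.of_forall abs_m_le_inv_cosh)

theorem integral_exp_mul_m (α : ℝ) :
    ∫ ξ : ℝ, Complex.exp ((α * ξ : ℝ) * Complex.I) * m ξ =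
      (π ^ 2 * logisticDensity (π * α / 2) : ℝ) := by
  have hfourier : 𝓕 (fun x : ℝ ↦ (logisticDensity x : ℂ)) = fun w ↦ (m (π ^ 2 * w) : ℂ) :=
    funext fourier_logisticDensity
  have hintegrable : Integrable fun w ↦ (m (π ^ 2 * w) : ℂ) :=
    (integrable_m.comp_mul_left' (by positivity)).ofReal
  have hinversion : 𝓕⁻ (fun w : ℝ ↦ (m (π ^ 2 * w) : ℂ)) (π * α / 2) =
      logisticDensity (π * α / 2) := by
    rw [← hfourier, integrable_logisticDensity.ofReal.fourierInv_fourier_eq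
      (hfourier ▸ hintegrable) (by fun_prop)]
  have hscale := Measure.integral_comp_mul_left
    (fun ξ : ℝ ↦ Complex.exp ((α * ξ : ℝ) * Complex.I) * m ξ) (π ^ 2)
  rw [abs_of_pos (by positivity), eq_inv_smul_iff₀ (by positivity)] at hscale
  have hphase : ∀ w : ℝ, 2 * π * inner ℝ w (π * α / 2) = α * (π ^ 2 * w) := fun w ↦ by
    rw [RCLike.inner_apply, conj_trivial]
    ring
  rw [← hscale, Complex.ofReal_mul, ← hinversion, Real.fourierInv_eq', Complex.real_smul]
  simp only [hphase, smul_eq_mul]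

theorem integral_m_mul_cos (α : ℝ) :
    ∫ ξ : ℝ, m ξ * cos (α * ξ) = π ^ 2 * logisticDensity (π * α / 2) := by
  have hintegrable : Integrable fun ξ : ℝ ↦ Complex.exp ((α * ξ : ℝ) * Complex.I) * m ξ :=
    integrable_m.ofReal.bdd_mul (c := 1) (by fun_prop)
      (.of_forall fun ξ ↦ (Complex.norm_exp_ofReal_mul_I _).le)
  have hre : ∀ ξ : ℝ,
      (Complex.exp ((α * ξ : ℝ) * Complex.I) * m ξ).re = m ξ * cos (α * ξ) := fun ξ ↦ by
    rw [Complex.re_mul_ofReal, Complex.exp_ofReal_mul_I_re, mul_comm]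
  have h := congrArg Complex.re (integral_exp_mul_m α)
  rw [Complex.ofReal_re] at h
  rw [← h, ← RCLike.re_eq_complex_re, ← integral_re hintegrable]
  simp only [RCLike.re_eq_complex_re, hre]

end Multiplier

/-- The multiplier `m(ξ) = 2ξ csch(2ξ)` is integrable and its (inverse) Fourier
integral is the explicit kernel `(π/8) sech²(πα/4)`. -/
theorem multiplier_kernel :
    Integrable m ∧
      ∀ α : ℝ, (1 / (2 * Real.pi)) * ∫ ξ : ℝ, m ξ * Real.cos (α * ξ) =
        (Real.pi / 8) * (1 / Real.cosh (Real.pi * α / 4)) ^ 2 := by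
  refine ⟨integrable_m, fun α ↦ ?_⟩
  rw [integral_m_mul_cos, logisticDensity_eq_inv_cosh_sq,
    show Real.pi * α / 2 / 2 = Real.pi * α / 4 by ring]
  field_simp
  norm_num
end

section
/- Let f : ℝ → ℂ be a Schwartz function with Fourier transform f̂(ξ) = (2π)^{−1/2}·∫_ℝ f(α)e^{−iαξ} dα. On ℝ × [−1,0] define u(α,β) = (2π)^{−1/2}·∫_ℝ (cosh((β+1)ξ)/cosh ξ)·f̂(ξ)·e^{iαξ} dξ and v(α,β) = (2π)^{−1/2}·∫_ℝ i·(sinh((β+1)ξ)/cosh ξ)·f̂(ξ)·e^{iαξ} dξ. Then u and v satisfy the Cauchy–Riemann equations ∂u/∂α = ∂v/∂β and ∂u/∂β = −∂v/∂α on ℝ × (−1,0), and on the top boundary v(α,0) = −(𝒯f)(α), where 𝒯f is the Schwartz function whose Fourier transform is ξ ↦ −i·tanh(ξ)·f̂(ξ). -/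
open MeasureTheory

/-- The Fourier transform `f̂(ξ) = (2π)^{−1/2} ∫ f(α) e^{−iαξ} dα`. -/
noncomputable def FT (f : ℝ → ℂ) (ξ : ℝ) : ℂ :=
  ((2 * Real.pi) ^ (-(1 : ℝ) / 2) : ℝ) •
    ∫ α : ℝ, f α * Complex.exp (-(Complex.I * α * ξ))

/-! For `f` integrable, `F(w) = (2π)^{−1/2} ∫ (f̂(ξ) / cosh ξ) e^{iwξ} dξ` is holomorphic on
`|Im w| < 1`. With `w = α + i(β + 1)` and its reflection `w* = α − i(β + 1)`, the identities
`2 cosh((β + 1)ξ) e^{iαξ} = e^{iwξ} + e^{iw*ξ}` and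
`2i · i sinh((β + 1)ξ) e^{iαξ} = e^{iwξ} − e^{iw*ξ}` give `u = (F(w) + F(w*)) / 2` and
`v = (F(w) − F(w*)) / (2i)`, and the Cauchy–Riemann equations for `u` and `v` follow from the
chain rule. On `β = 0` the multiplier of `v` is `i tanh ξ`, so `v = −𝒯f` there by Fourier
inversion. -/

open Complex FourierTransform
open scoped Topology

section SchwarzReflection

/-- The half-sum of `F` at `x + iy` and at the reflected point `x - iy`. If `F` commutes with
conjugation, this is the real part of `F (x + iy)`. -/
noncomputable def schwarzRe (F : ℂ → ℂ) (x y : ℝ) : ℂ :=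
  (F (x + y * I) + F (x - y * I)) / 2

/-- The half-difference of `F` at `x + iy` and at the reflected point `x - iy`, divided by `i`.
If `F` commutes with conjugation, this is the imaginary part of `F (x + iy)`. -/
noncomputable def schwarzIm (F : ℂ → ℂ) (x y : ℝ) : ℂ :=
  (F (x + y * I) - F (x - y * I)) / (2 * I)

theorem hasDerivAt_comp_ofReal_add {F : ℂ → ℂ} {a : ℝ} {s : ℂ} (hF : DifferentiableAt ℂ F (a + s)) :
    HasDerivAt (fun x : ℝ ↦ F (x + s)) (deriv F (a + s)) a :=
  (hF.hasDerivAt.comp_add_const (a : ℂ) s).comp_ofReal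

theorem hasDerivAt_comp_add_ofReal_mul {F : ℂ → ℂ} {b : ℝ} {s c : ℂ}
    (hF : DifferentiableAt ℂ F (s + b * c)) :
    HasDerivAt (fun y : ℝ ↦ F (s + y * c)) (deriv F (s + b * c) * c) b := by
  have hline : HasDerivAt (fun z : ℂ ↦ s + z * c) c b := by
    simpa using ((hasDerivAt_id (b : ℂ)).mul_const c).const_add s
  exact (hF.hasDerivAt.comp (b : ℂ) hline).comp_ofReal

variable {F : ℂ → ℂ} {a b : ℝ}

theorem hasDerivAt_schwarzRe_left (hF : DifferentiableAt ℂ F (a + b * I))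
    (hF' : DifferentiableAt ℂ F (a - b * I)) :
    HasDerivAt (fun x ↦ schwarzRe F x b) (schwarzRe (deriv F) a b) a := by
  simp only [schwarzRe, sub_eq_add_neg] at hF' ⊢
  exact ((hasDerivAt_comp_ofReal_add hF).add (hasDerivAt_comp_ofReal_add hF')).div_const 2

theorem hasDerivAt_schwarzIm_left (hF : DifferentiableAt ℂ F (a + b * I))
    (hF' : DifferentiableAt ℂ F (a - b * I)) :
    HasDerivAt (fun x ↦ schwarzIm F x b) (schwarzIm (deriv F) a b) a := by
  simp only [schwarzIm, sub_eq_add_neg (a : ℂ), sub_eq_add_neg ((_ : ℝ) : ℂ)] at hF' ⊢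
  exact ((hasDerivAt_comp_ofReal_add hF).sub (hasDerivAt_comp_ofReal_add hF')).div_const (2 * I)

theorem hasDerivAt_schwarzRe_right (hF : DifferentiableAt ℂ F (a + b * I))
    (hF' : DifferentiableAt ℂ F (a - b * I)) :
    HasDerivAt (fun y ↦ schwarzRe F a y) (-schwarzIm (deriv F) a b) b := by
  simp only [schwarzRe, schwarzIm, sub_eq_add_neg (a : ℂ), ← mul_neg] at hF' ⊢
  refine (((hasDerivAt_comp_add_ofReal_mul hF).add
    (hasDerivAt_comp_add_ofReal_mul hF')).div_const 2).congr_deriv ?_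
  rw [← neg_div, div_eq_div_iff two_ne_zero (by simp)]
  linear_combination 2 * (deriv F (a + b * I) - deriv F (a + b * -I)) * I_sq

theorem hasDerivAt_schwarzIm_right (hF : DifferentiableAt ℂ F (a + b * I))
    (hF' : DifferentiableAt ℂ F (a - b * I)) :
    HasDerivAt (fun y ↦ schwarzIm F a y) (schwarzRe (deriv F) a b) b := by
  simp only [schwarzRe, schwarzIm, sub_eq_add_neg (a : ℂ), ← mul_neg] at hF' ⊢
  refine (((hasDerivAt_comp_add_ofReal_mul hF).sub
    (hasDerivAt_comp_add_ofReal_mul hF')).div_const (2 * I)).congr_deriv ?_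
  rw [div_eq_div_iff (by simp) two_ne_zero]
  ring

end SchwarzReflection

section InverseTransform

/-- The inverse of `FT`, evaluated at complex arguments: on the real line it inverts `FT`, and it
is holomorphic on every strip `|Im w| < B` for which `e^{B|ξ|} φ(ξ)` is integrable. -/
noncomputable def invFT (φ : ℝ → ℂ) (w : ℂ) : ℂ :=
  ((2 * Real.pi) ^ (-(1 : ℝ) / 2) : ℝ) • ∫ ξ : ℝ, φ ξ * exp (I * w * ξ)

theorem norm_exp_I_mul_mul_ofReal_le (w : ℂ) (ξ : ℝ) :
    ‖exp (I * w * ξ)‖ ≤ Real.exp (|w.im| * |ξ|) := by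
  rw [norm_exp, Real.exp_le_exp]
  calc (I * w * ξ).re = -(w.im * ξ) := by simp
    _ ≤ |w.im * ξ| := neg_le_abs _
    _ = |w.im| * |ξ| := abs_mul _ _

variable {φ : ℝ → ℂ} {B : ℝ}

theorem aestronglyMeasurable_of_exp_mul_abs_smul
    (hφ : AEStronglyMeasurable (fun ξ ↦ Real.exp (B * |ξ|) • φ ξ)) : AEStronglyMeasurable φ := by
  have hweight : Continuous fun ξ : ℝ ↦ Real.exp (-(B * |ξ|)) := by fun_prop
  have hcancel (ξ : ℝ) : Real.exp (-(B * |ξ|)) • Real.exp (B * |ξ|) • φ ξ = φ ξ := by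
    rw [smul_smul, ← Real.exp_add, neg_add_cancel, Real.exp_zero, one_smul]
  exact (hweight.aestronglyMeasurable.smul hφ).congr (.of_forall hcancel)

theorem integrable_mul_exp_I_mul_mul {w : ℂ}
    (hφ : Integrable fun ξ ↦ Real.exp (B * |ξ|) • φ ξ) (hw : |w.im| ≤ B) :
    Integrable fun ξ : ℝ ↦ φ ξ * exp (I * w * ξ) := by
  have hexp : Continuous fun ξ : ℝ ↦ exp (I * w * ξ) := by fun_prop
  refine hφ.mono ((aestronglyMeasurable_of_exp_mul_abs_smul hφ.1).mul hexp.aestronglyMeasurable)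
    (.of_forall fun ξ ↦ ?_)
  rw [norm_mul, norm_smul, Real.norm_eq_abs, Real.abs_exp, mul_comm]
  gcongr
  exact (norm_exp_I_mul_mul_ofReal_le w ξ).trans (by gcongr)

theorem hasDerivAt_exp_I_mul_mul (ξ : ℝ) (w : ℂ) :
    HasDerivAt (fun z : ℂ ↦ exp (I * z * ξ)) (exp (I * w * ξ) * (I * ξ)) w := by
  simpa using (((hasDerivAt_id w).const_mul I).mul_const (ξ : ℂ)).cexp

/-- Lowering the exponential rate by `δ` absorbs the factor `ξ` produced by differentiation. -/
theorem norm_deriv_exp_I_mul_mul_le {δ : ℝ} (hδ : 0 < δ) {w : ℂ} (hw : |w.im| ≤ B - δ) (ξ : ℝ) :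
    ‖exp (I * w * ξ) * (I * ξ)‖ ≤ δ⁻¹ * Real.exp (B * |ξ|) := by
  have hlinear : |ξ| ≤ δ⁻¹ * Real.exp (δ * |ξ|) := by
    rw [le_inv_mul_iff₀ hδ]
    linarith [Real.add_one_le_exp (δ * |ξ|)]
  calc ‖exp (I * w * ξ) * (I * ξ)‖ = ‖exp (I * w * ξ)‖ * |ξ| := by simp
    _ ≤ Real.exp ((B - δ) * |ξ|) * (δ⁻¹ * Real.exp (δ * |ξ|)) := by
      gcongr
      exact (norm_exp_I_mul_mul_ofReal_le w ξ).trans (by gcongr)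
    _ = δ⁻¹ * Real.exp (B * |ξ|) := by
      rw [mul_left_comm, ← Real.exp_add]
      ring_nf

theorem differentiableAt_invFT {w : ℂ} (hφ : Integrable fun ξ ↦ Real.exp (B * |ξ|) • φ ξ)
    (hw : |w.im| < B) : DifferentiableAt ℂ (invFT φ) w := by
  obtain ⟨r, hwr, hrB⟩ := exists_between hw
  have hstrip : {z : ℂ | |z.im| < r} ∈ 𝓝 w :=
    (isOpen_lt (by fun_prop) continuous_const).mem_nhds hwr
  have hmeas := aestronglyMeasurable_of_exp_mul_abs_smul hφ.1
  have hbound (ξ : ℝ) (z : ℂ) (hz : |z.im| < r) :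
      ‖φ ξ * (exp (I * z * ξ) * (I * ξ))‖ ≤ (B - r)⁻¹ * ‖Real.exp (B * |ξ|) • φ ξ‖ := by
    calc ‖φ ξ * (exp (I * z * ξ) * (I * ξ))‖
        = ‖φ ξ‖ * ‖exp (I * z * ξ) * (I * ξ)‖ := norm_mul _ _
      _ ≤ ‖φ ξ‖ * ((B - r)⁻¹ * Real.exp (B * |ξ|)) := by
        gcongr
        exact norm_deriv_exp_I_mul_mul_le (sub_pos.2 hrB) (hz.le.trans_eq (sub_sub_self B r).symm) ξ
      _ = (B - r)⁻¹ * ‖Real.exp (B * |ξ|) • φ ξ‖ := by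
        rw [norm_smul, Real.norm_eq_abs, Real.abs_exp]
        ring
  have hderiv := (hasDerivAt_integral_of_dominated_loc_of_deriv_le
    (F' := fun z ξ ↦ φ ξ * (exp (I * z * ξ) * (I * ξ))) hstrip
    (.of_forall fun z ↦ hmeas.mul (by fun_prop)) (integrable_mul_exp_I_mul_mul hφ hw.le)
    (hmeas.mul (by fun_prop)) (.of_forall hbound) (hφ.norm.const_mul _)
    (.of_forall fun ξ z _ ↦ (hasDerivAt_exp_I_mul_mul ξ z).const_mul _)).2
  exact (hderiv.const_smul ((2 * Real.pi) ^ (-(1 : ℝ) / 2) : ℝ)).differentiableAt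

theorem cosh_mul_exp_I_mul_mul (a b ξ : ℂ) :
    cosh (b * ξ) * exp (I * a * ξ) =
      (exp (I * (a + b * I) * ξ) + exp (I * (a - b * I) * ξ)) / 2 := by
  have hplus : I * (a + b * I) * ξ = -(b * ξ) + I * a * ξ := by linear_combination b * ξ * I_sq
  have hminus : I * (a - b * I) * ξ = b * ξ + I * a * ξ := by linear_combination -b * ξ * I_sq
  rw [hplus, hminus, exp_add, exp_add, cosh]
  ring

theorem I_mul_sinh_mul_exp_I_mul_mul (a b ξ : ℂ) :
    I * sinh (b * ξ) * exp (I * a * ξ) =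
      (exp (I * (a + b * I) * ξ) - exp (I * (a - b * I) * ξ)) / (2 * I) := by
  have hplus : I * (a + b * I) * ξ = -(b * ξ) + I * a * ξ := by linear_combination b * ξ * I_sq
  have hminus : I * (a - b * I) * ξ = b * ξ + I * a * ξ := by linear_combination -b * ξ * I_sq
  rw [hplus, hminus, exp_add, exp_add, sinh, eq_div_iff (by simp)]
  linear_combination (exp (b * ξ) - exp (-(b * ξ))) * exp (I * a * ξ) * I_sq

theorem invFT_cosh_mul (hφ : Integrable fun ξ ↦ Real.exp (B * |ξ|) • φ ξ) (a : ℝ) {b : ℝ}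
    (hb : |b| ≤ B) :
    invFT (fun ξ ↦ Real.cosh (b * ξ) * φ ξ) a = schwarzRe (invFT φ) a b := by
  have hplus := integrable_mul_exp_I_mul_mul (w := a + b * I) hφ (by simpa using hb)
  have hminus := integrable_mul_exp_I_mul_mul (w := a - b * I) hφ (by simpa using hb)
  have hpoint (ξ : ℝ) : Real.cosh (b * ξ) * φ ξ * exp (I * a * ξ) =
      (φ ξ * exp (I * (a + b * I) * ξ) + φ ξ * exp (I * (a - b * I) * ξ)) / 2 := by
    push_cast
    linear_combination φ ξ * cosh_mul_exp_I_mul_mul a b ξ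
  simp only [schwarzRe, invFT, hpoint, integral_div, integral_add hplus hminus, ← smul_add,
    smul_div_assoc]

theorem invFT_I_mul_sinh_mul (hφ : Integrable fun ξ ↦ Real.exp (B * |ξ|) • φ ξ) (a : ℝ) {b : ℝ}
    (hb : |b| ≤ B) :
    invFT (fun ξ ↦ I * Real.sinh (b * ξ) * φ ξ) a = schwarzIm (invFT φ) a b := by
  have hplus := integrable_mul_exp_I_mul_mul (w := a + b * I) hφ (by simpa using hb)
  have hminus := integrable_mul_exp_I_mul_mul (w := a - b * I) hφ (by simpa using hb)
  have hpoint (ξ : ℝ) : I * Real.sinh (b * ξ) * φ ξ * exp (I * a * ξ) =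
      (φ ξ * exp (I * (a + b * I) * ξ) - φ ξ * exp (I * (a - b * I) * ξ)) / (2 * I) := by
    push_cast
    linear_combination φ ξ * I_mul_sinh_mul_exp_I_mul_mul a b ξ
  simp only [schwarzIm, invFT, hpoint, integral_div, integral_sub hplus hminus, ← smul_sub,
    smul_div_assoc]

end InverseTransform

section Inversion

theorem FT_eq_fourier (f : ℝ → ℂ) (ξ : ℝ) :
    FT f ξ = ((2 * Real.pi) ^ (-(1 : ℝ) / 2) : ℝ) • 𝓕 f (ξ / (2 * Real.pi)) := by
  rw [FT, Real.fourier_real_eq_integral_exp_smul]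
  congr 2 with α
  rw [smul_eq_mul, mul_comm]
  congr 2
  push_cast
  field_simp

theorem integrable_FT_iff {f : ℝ → ℂ} : Integrable (FT f) ↔ Integrable (𝓕 f) := by
  have hscale : ((2 * Real.pi) ^ (-(1 : ℝ) / 2) : ℝ) ≠ 0 := by positivity
  rw [funext (FT_eq_fourier f), integrable_fun_smul_iff hscale,
    integrable_comp_div_iff _ Real.two_pi_pos.ne']

theorem invFT_FT {g : ℝ → ℂ} (hcont : Continuous g) (hg : Integrable g) (hFT : Integrable (FT g))
    (a : ℝ) : invFT (FT g) a = g a := by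
  let G (η : ℝ) : ℂ := exp (↑(2 * Real.pi * (η * a)) * I) • 𝓕 g η
  have hscale : (2 * Real.pi) ^ (-(1 : ℝ) / 2) * (2 * Real.pi) ^ (-(1 : ℝ) / 2) =
      (2 * Real.pi)⁻¹ := by
    rw [← Real.rpow_add Real.two_pi_pos, ← Real.rpow_neg_one]
    norm_num
  have hG (ξ : ℝ) : FT g ξ * exp (I * a * ξ) =
      ((2 * Real.pi) ^ (-(1 : ℝ) / 2) : ℝ) • G (ξ / (2 * Real.pi)) := by
    have hphase : I * a * ξ = ↑(2 * Real.pi * (ξ / (2 * Real.pi) * a)) * I := by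
      push_cast
      field_simp
    rw [FT_eq_fourier, smul_mul_assoc, hphase, mul_comm (𝓕 g _), ← smul_eq_mul (exp _)]
  calc invFT (FT g) a = ∫ η, G η := by
        simp only [invFT, hG]
        rw [integral_smul, Measure.integral_comp_div, smul_smul, hscale,
          abs_of_pos Real.two_pi_pos, inv_smul_smul₀ Real.two_pi_pos.ne']
    _ = 𝓕⁻ (𝓕 g) a := by simp only [G, Real.fourierInv_eq', RCLike.inner_apply, conj_trivial,
      mul_comm a]
    _ = g a := by rw [hcont.fourierInv_fourier_eq hg (integrable_FT_iff.1 hFT)]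

theorem continuous_FT {f : ℝ → ℂ} (hf : Integrable f) : Continuous (FT f) := by
  have hfourier : Continuous (𝓕 f) :=
    VectorFourier.fourierIntegral_continuous Real.continuous_fourierChar continuous_inner hf
  rw [funext (FT_eq_fourier f)]
  fun_prop

theorem norm_FT_le (f : ℝ → ℂ) (ξ : ℝ) :
    ‖FT f ξ‖ ≤ (2 * Real.pi) ^ (-(1 : ℝ) / 2) * ∫ α, ‖f α‖ := by
  rw [FT_eq_fourier, norm_smul, Real.norm_of_nonneg (by positivity)]
  gcongr
  exact VectorFourier.norm_fourierIntegral_le_integral_norm _ _ _ _ _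

end Inversion

section Strip

theorem integrable_exp_mul_abs_of_neg {c : ℝ} (hc : c < 0) :
    Integrable fun ξ : ℝ ↦ Real.exp (c * |ξ|) := by
  simp only [← Real.norm_eq_abs]
  exact (integrable_fun_norm_addHaar volume (f := fun r ↦ Real.exp (c * r))).2
    (by simpa using integrableOn_exp_mul_Ioi hc 0)

theorem exp_mul_abs_div_cosh_le (b ξ : ℝ) :
    Real.exp (b * |ξ|) / Real.cosh ξ ≤ 2 * Real.exp ((b - 1) * |ξ|) := by
  have hcosh : Real.exp |ξ| ≤ 2 * Real.cosh ξ := by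
    rw [Real.cosh_eq]
    linarith [Real.exp_abs_le ξ]
  rw [div_le_iff₀ (Real.cosh_pos ξ)]
  calc Real.exp (b * |ξ|) = Real.exp ((b - 1) * |ξ|) * Real.exp |ξ| := by
        rw [← Real.exp_add]
        ring_nf
    _ ≤ Real.exp ((b - 1) * |ξ|) * (2 * Real.cosh ξ) := by gcongr
    _ = 2 * Real.exp ((b - 1) * |ξ|) * Real.cosh ξ := by ring

theorem integrable_exp_mul_abs_smul_FT_div_cosh {f : ℝ → ℂ} (hf : Integrable f) {b : ℝ}
    (hb : b < 1) : Integrable fun ξ ↦ Real.exp (b * |ξ|) • (FT f ξ / Real.cosh ξ) := by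
  have hratio : Integrable fun ξ : ℝ ↦ Real.exp (b * |ξ|) / Real.cosh ξ := by
    have hcont : Continuous fun ξ : ℝ ↦ Real.exp (b * |ξ|) / Real.cosh ξ :=
      Continuous.div (by fun_prop) Real.continuous_cosh fun ξ ↦ (Real.cosh_pos ξ).ne'
    refine ((integrable_exp_mul_abs_of_neg (sub_neg.2 hb)).const_mul 2).mono'
      hcont.aestronglyMeasurable (.of_forall fun ξ ↦ ?_)
    rw [Real.norm_of_nonneg (by positivity)]
    exact exp_mul_abs_div_cosh_le b ξ
  refine (hratio.ofReal.bdd_mul (continuous_FT hf).aestronglyMeasurable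
    (.of_forall (norm_FT_le f))).congr (.of_forall fun ξ ↦ ?_)
  simp only [real_smul, RCLike.ofReal_div, coe_algebraMap]
  ring

/-- The function `F(w) = (2π)^{−1/2} ∫ (f̂(ξ) / cosh ξ) e^{iwξ} dξ`, holomorphic on `|Im w| < 1`,
whose Schwarz parts are the harmonic extension of `f` to the strip and its conjugate. -/
noncomputable def stripPotential (f : ℝ → ℂ) : ℂ → ℂ :=
  invFT fun ξ ↦ FT f ξ / Real.cosh ξ

/-- The harmonic extension of `f` to the strip, the function `u` of the paper. The second argument
is the height `y = β + 1` above the bottom, so that `f` lives on `y = 1`. -/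
noncomputable def stripExtension (f : ℝ → ℂ) (x y : ℝ) : ℂ :=
  invFT (fun ξ ↦ ((Real.cosh (y * ξ) / Real.cosh ξ : ℝ) : ℂ) * FT f ξ) x

/-- The harmonic conjugate of `stripExtension f`, the function `v` of the paper, with the same
height `y = β + 1` above the bottom as second argument. -/
noncomputable def stripConjugate (f : ℝ → ℂ) (x y : ℝ) : ℂ :=
  invFT (fun ξ ↦ I * ((Real.sinh (y * ξ) / Real.cosh ξ : ℝ) : ℂ) * FT f ξ) x

variable {f : ℝ → ℂ} {x y : ℝ}

theorem differentiableAt_stripPotential (hf : Integrable f) {w : ℂ} (hw : |w.im| < 1) :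
    DifferentiableAt ℂ (stripPotential f) w := by
  obtain ⟨B, hwB, hB⟩ := exists_between hw
  exact differentiableAt_invFT (integrable_exp_mul_abs_smul_FT_div_cosh hf hB) hwB

theorem stripExtension_eq_schwarzRe (hf : Integrable f) (hy : |y| < 1) :
    stripExtension f x y = schwarzRe (stripPotential f) x y := by
  rw [stripPotential, stripExtension,
    ← invFT_cosh_mul (integrable_exp_mul_abs_smul_FT_div_cosh hf hy) x le_rfl]
  congr 1 with ξ
  rw [ofReal_div, div_mul_eq_mul_div, mul_div_assoc]

theorem stripConjugate_eq_schwarzIm (hf : Integrable f) (hy : |y| < 1) :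
    stripConjugate f x y = schwarzIm (stripPotential f) x y := by
  rw [stripPotential, stripConjugate,
    ← invFT_I_mul_sinh_mul (integrable_exp_mul_abs_smul_FT_div_cosh hf hy) x le_rfl]
  congr 1 with ξ
  rw [ofReal_div, mul_assoc, mul_assoc, div_mul_eq_mul_div, mul_div_assoc]

theorem hasDerivAt_stripExtension_left (hf : Integrable f) (hy : |y| < 1) :
    HasDerivAt (fun x ↦ stripExtension f x y) (schwarzRe (deriv (stripPotential f)) x y) x := by
  simp only [stripExtension_eq_schwarzRe hf hy]
  exact hasDerivAt_schwarzRe_left (differentiableAt_stripPotential hf (by simpa using hy))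
    (differentiableAt_stripPotential hf (by simpa using hy))

theorem hasDerivAt_stripConjugate_left (hf : Integrable f) (hy : |y| < 1) :
    HasDerivAt (fun x ↦ stripConjugate f x y) (schwarzIm (deriv (stripPotential f)) x y) x := by
  simp only [stripConjugate_eq_schwarzIm hf hy]
  exact hasDerivAt_schwarzIm_left (differentiableAt_stripPotential hf (by simpa using hy))
    (differentiableAt_stripPotential hf (by simpa using hy))

theorem hasDerivAt_stripExtension_right (hf : Integrable f) (hy : |y| < 1) :
    HasDerivAt (fun y ↦ stripExtension f x y) (-schwarzIm (deriv (stripPotential f)) x y) y :=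
  (hasDerivAt_schwarzRe_right (differentiableAt_stripPotential hf (by simpa using hy))
    (differentiableAt_stripPotential hf (by simpa using hy))).congr_of_eventuallyEq
      ((continuous_abs.continuousAt.eventually_lt_const hy).mono fun _ ht ↦
        stripExtension_eq_schwarzRe hf ht)

theorem hasDerivAt_stripConjugate_right (hf : Integrable f) (hy : |y| < 1) :
    HasDerivAt (fun y ↦ stripConjugate f x y) (schwarzRe (deriv (stripPotential f)) x y) y :=
  (hasDerivAt_schwarzIm_right (differentiableAt_stripPotential hf (by simpa using hy))
    (differentiableAt_stripPotential hf (by simpa using hy))).congr_of_eventuallyEq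
      ((continuous_abs.continuousAt.eventually_lt_const hy).mono fun _ ht ↦
        stripConjugate_eq_schwarzIm hf ht)

theorem stripConjugate_one {g : ℝ → ℂ} (hcont : Continuous g) (hint : Integrable g)
    (hFT : Integrable (FT g)) (hg : ∀ ξ : ℝ, FT g ξ = -I * (Real.tanh ξ : ℂ) * FT f ξ) :
    stripConjugate f x 1 = -g x := by
  rw [← invFT_FT hcont hint hFT, stripConjugate, invFT, invFT, ← smul_neg, ← integral_neg]
  congr 2 with ξ
  rw [hg, one_mul, Real.tanh_eq_sinh_div_cosh]
  ring

end Strip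

theorem strip_harmonic_conjugate_general {f g : ℝ → ℂ} {u v : ℝ → ℝ → ℂ} (hf : Integrable f)
    (hgcont : Continuous g) (hgint : Integrable g) (hgFT : Integrable (FT g))
    (hu : ∀ α β : ℝ, u α β =
      ((2 * Real.pi) ^ (-(1 : ℝ) / 2) : ℝ) •
        ∫ ξ : ℝ, ((Real.cosh ((β + 1) * ξ) / Real.cosh ξ : ℝ) : ℂ) * FT f ξ * exp (I * α * ξ))
    (hv : ∀ α β : ℝ, v α β =
      ((2 * Real.pi) ^ (-(1 : ℝ) / 2) : ℝ) •
        ∫ ξ : ℝ, I * ((Real.sinh ((β + 1) * ξ) / Real.cosh ξ : ℝ) : ℂ) * FT f ξ *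
          exp (I * α * ξ))
    (hg : ∀ ξ : ℝ, FT g ξ = -I * (Real.tanh ξ : ℂ) * FT f ξ) :
    (∀ α β : ℝ, β ∈ Set.Ioo (-1 : ℝ) 0 →
        deriv (fun x ↦ u x β) α = deriv (fun y ↦ v α y) β ∧
          deriv (fun y ↦ u α y) β = -deriv (fun x ↦ v x β) α) ∧
      ∀ α : ℝ, v α 0 = -g α := by
  obtain rfl : u = fun α β ↦ stripExtension f α (β + 1) := funext₂ hu
  obtain rfl : v = fun α β ↦ stripConjugate f α (β + 1) := funext₂ hv
  refine ⟨fun α β ⟨hβ, hβ'⟩ ↦ ?_, fun α ↦ ?_⟩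
  · have hy : |β + 1| < 1 := abs_lt.2 ⟨by linarith, by linarith⟩
    rw [(hasDerivAt_stripExtension_left hf hy).deriv, (hasDerivAt_stripConjugate_left hf hy).deriv,
      deriv_comp_add_const, deriv_comp_add_const, (hasDerivAt_stripExtension_right hf hy).deriv,
      (hasDerivAt_stripConjugate_right hf hy).deriv]
    exact ⟨rfl, rfl⟩
  · simpa only [zero_add] using stripConjugate_one hgcont hgint hgFT hg

/-- The harmonic conjugate on the strip: `u` and `v` satisfy the
Cauchy–Riemann equations, and on the top boundary `v(α,0) = −(𝒯f)(α)`, where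
`𝒯` is the Tilbert transform, i.e. the Fourier multiplier `−i tanh ξ`. -/
theorem strip_harmonic_conjugate (f g : SchwartzMap ℝ ℂ) (u v : ℝ → ℝ → ℂ)
    (hu : ∀ α β : ℝ, u α β =
      ((2 * Real.pi) ^ (-(1 : ℝ) / 2) : ℝ) •
        ∫ ξ : ℝ, ((Real.cosh ((β + 1) * ξ) / Real.cosh ξ : ℝ) : ℂ) * FT (⇑f) ξ *
          Complex.exp (Complex.I * α * ξ))
    (hv : ∀ α β : ℝ, v α β =
      ((2 * Real.pi) ^ (-(1 : ℝ) / 2) : ℝ) •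
        ∫ ξ : ℝ, Complex.I * ((Real.sinh ((β + 1) * ξ) / Real.cosh ξ : ℝ) : ℂ) * FT (⇑f) ξ *
          Complex.exp (Complex.I * α * ξ))
    (hg : ∀ ξ : ℝ, FT (⇑g) ξ = -Complex.I * (Real.tanh ξ : ℂ) * FT (⇑f) ξ) :
    (∀ α β : ℝ, β ∈ Set.Ioo (-1 : ℝ) 0 →
        deriv (fun x => u x β) α = deriv (fun y => v α y) β ∧
          deriv (fun y => u α y) β = -deriv (fun x => v x β) α) ∧
      (∀ α : ℝ, v α 0 = -g α) :=
  strip_harmonic_conjugate_general f.integrable g.continuous g.integrable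
    (integrable_FT_iff.2 (g.fourier_coe ▸ (𝓕 g).integrable)) hu hv hg
end
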